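/- arXiv:1209.3852 — 7 statements merged into one kernel-verified Lean document; each statement's English description precedes it below -/
import Mathlib

section
/- Let Λ be an abelian group, K a subgroup of Λ, and π : Λ → Λ⧸K the quotient map. Regard the group of all functions Λ → ℤ as a module over the group ring ℤ[Λ], where a finitely supported function f acts by convolution: (f • Φ)(λ) = Σ_{μ ∈ supp f} f(μ) · Φ(λ − μ). Then a function Φ : Λ → ℤ belongs to the ℤ[Λ]-submodule of functions Λ → ℤ generated by the functions whose support is contained in K if and only if the image π(supp Φ) of the support of Φ in Λ⧸K is finite. -/
/-- The convolution action of the group ring `ℤ[Λ]` (finitely supported functions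
`Λ →₀ ℤ`) on the module of all functions `Λ → ℤ`:
`(f • Φ) λ = Σ_{μ ∈ supp f} f μ * Φ (λ - μ)`. -/
def convSMul {Λ : Type*} [AddCommGroup Λ] (f : Λ →₀ ℤ) (Φ : Λ → ℤ) : Λ → ℤ :=
  fun l => ∑ μ ∈ f.support, f μ * Φ (l - μ)

/-- The `ℤ[Λ]`-submodule of functions `Λ → ℤ` generated by the functions whose
support is contained in `s`, realized as the additive subgroup generated by all
convolutions `f • Ψ` with `Ψ` supported in `s` (this additive subgroup is
automatically stable under the convolution action, hence is the submodule
generated by these functions). -/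
def convSpan {Λ : Type*} [AddCommGroup Λ] (s : Set Λ) : AddSubgroup (Λ → ℤ) :=
  AddSubgroup.closure
    {g | ∃ (f : Λ →₀ ℤ) (Ψ : Λ → ℤ), Function.support Ψ ⊆ s ∧ g = convSMul f Ψ}

/-- A function `Φ : Λ → ℤ` lies in the `ℤ[Λ]`-submodule generated by the functions
supported in a subgroup `K` if and only if the image of its support in `Λ⧸K` is
finite. -/
theorem mem_convSpan_iff_finite_image_support
    (Λ : Type*) [AddCommGroup Λ] (K : AddSubgroup Λ) (Φ : Λ → ℤ) :
    Φ ∈ convSpan (K : Set Λ) ↔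
      (((QuotientAddGroup.mk' K) '' (Function.support Φ)) : Set (Λ ⧸ K)).Finite := by
  classical
  constructor
  · intro h
    unfold convSpan at h
    induction h using AddSubgroup.closure_induction with
    | mem g hg =>
      obtain ⟨f, Ψ, hΨ, rfl⟩ := hg
      refine (f.support.finite_toSet.image (QuotientAddGroup.mk' K)).subset ?_
      rintro _ ⟨l, hl, rfl⟩
      obtain ⟨m, hm, hne⟩ := Finset.exists_ne_zero_of_sum_ne_zero hl
      have hK : l - m ∈ K := hΨ (right_ne_zero_of_mul hne)
      refine ⟨m, hm, ?_⟩
      refine (QuotientAddGroup.eq (s := K)).2 ?_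
      rwa [neg_add_eq_sub]
    | zero => simp
    | add x y _ _ hx hy =>
      refine (hx.union hy).subset ?_
      rw [← Set.image_union]
      exact Set.image_mono (Function.support_add x y)
    | neg x _ hx => rwa [Function.support_neg]
  · intro h
    have key : Φ = ∑ q ∈ h.toFinset, convSMul (Finsupp.single q.out 1)
        (fun l => if l ∈ K then Φ (l + q.out) else 0) := by
      funext l
      rw [Finset.sum_apply]
      have e : ∀ q : Λ ⧸ K, convSMul (Finsupp.single q.out 1)
          (fun l => if l ∈ K then Φ (l + q.out) else 0) l
          = if q = QuotientAddGroup.mk' K l then Φ l else 0 := by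
        intro q
        have hq : l - q.out ∈ K ↔ q = QuotientAddGroup.mk' K l := by
          rw [← neg_add_eq_sub, ← QuotientAddGroup.eq, QuotientAddGroup.out_eq']
          rfl
        unfold convSMul
        rw [Finsupp.support_single_ne_zero _ one_ne_zero]
        simp only [Finset.sum_singleton, Finsupp.single_eq_same, one_mul, sub_add_cancel]
        exact if_congr hq rfl rfl
      rw [Finset.sum_congr rfl (fun q _ => e q), Finset.sum_ite_eq']
      split_ifs with hl
      · rfl
      · by_contra hne
        exact hl (h.mem_toFinset.2 ⟨l, hne, rfl⟩)
    rw [key]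
    refine AddSubgroup.sum_mem _ fun q _ => AddSubgroup.subset_closure ⟨_, _, ?_, rfl⟩
    intro l hl
    by_contra hn
    exact hl (if_neg hn)
end

section
/- Let p : A → B be a surjective homomorphism of abelian groups, K a subgroup of B, and Φ : B → ℤ a function. Regard the group of all functions Λ → ℤ on an abelian group Λ as a module over the group ring ℤ[Λ], where a finitely supported function f acts by convolution: (f • Φ)(λ) = Σ_{μ ∈ supp f} f(μ) · Φ(λ − μ). Then Φ belongs to the ℤ[B]-submodule of functions B → ℤ generated by the functions supported in K if and only if the pullback Φ ∘ p belongs to the ℤ[A]-submodule of functions A → ℤ generated by the functions supported in p⁻¹(K). -/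
theorem mem_convSpan_iff_finite_cover {L : Type*} [AddCommGroup L] (K : AddSubgroup L)
    (F : L → ℤ) :
    F ∈ convSpan (K : Set L) ↔ ∃ T : Finset L, ∀ l, F l ≠ 0 → ∃ t ∈ T, l - t ∈ K := by
  classical
  constructor
  · intro h
    unfold convSpan at h
    induction h using AddSubgroup.closure_induction with
    | mem x hx =>
      obtain ⟨f, P, hP, rfl⟩ := hx
      refine ⟨f.support, fun l hl => ?_⟩
      obtain ⟨t, ht, h⟩ := Finset.exists_ne_zero_of_sum_ne_zero hl
      exact ⟨t, ht, hP (right_ne_zero_of_mul h)⟩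
    | zero => exact ⟨∅, fun l hl => absurd rfl hl⟩
    | add x y _ _ hx hy =>
      obtain ⟨T, hT⟩ := hx
      obtain ⟨S, hS⟩ := hy
      refine ⟨T ∪ S, fun l hl => ?_⟩
      by_cases h : x l = 0
      · obtain ⟨t, ht, h'⟩ := hS l (by intro h2; exact hl (by simp [h, h2]))
        exact ⟨t, Finset.mem_union_right _ ht, h'⟩
      · obtain ⟨t, ht, h'⟩ := hT l h
        exact ⟨t, Finset.mem_union_left _ ht, h'⟩
    | neg x _ hx =>
      obtain ⟨T, hT⟩ := hx
      exact ⟨T, fun l hl => hT l (by simpa using hl)⟩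
  · rintro ⟨T, hT⟩
    induction T using Finset.induction_on generalizing F with
    | empty =>
      have : F = 0 := by
        funext l
        by_contra h
        simpa using hT l h
      rw [this]
      exact zero_mem _
    | insert t T _ ih =>
      have e : F = convSMul (Finsupp.single t 1) (fun x => if x ∈ K then F (x + t) else 0)
          + fun l => if l - t ∈ K then 0 else F l := by
        funext l
        simp only [convSMul, Pi.add_apply]
        rw [Finsupp.support_single_ne_zero _ one_ne_zero]
        by_cases h : l - t ∈ K <;> simp [h]
      rw [e]
      refine add_mem (AddSubgroup.subset_closure ⟨_, _, ?_, rfl⟩) (ih _ ?_)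
      · intro x hx
        by_contra h
        have h' : x ∉ K := h
        simp [h'] at hx
      · intro l hl
        by_cases h : l - t ∈ K
        · simp [h] at hl
        · obtain ⟨s, hs, h'⟩ := hT l (by simpa [h] using hl)
          rcases Finset.mem_insert.1 hs with rfl | hs
          · exact absurd h' h
          · exact ⟨s, hs, h'⟩

/-- For a surjective homomorphism `p : A → B` of abelian groups and a subgroup
`K ≤ B`, a function `Φ : B → ℤ` lies in the `ℤ[B]`-submodule generated by the
functions supported in `K` if and only if its pullback `Φ ∘ p` lies in the
`ℤ[A]`-submodule generated by the functions supported in `p⁻¹(K)`. -/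
theorem mem_convSpan_iff_pullback_mem_convSpan
    (A B : Type*) [AddCommGroup A] [AddCommGroup B]
    (p : A →+ B) (hp : Function.Surjective p)
    (K : AddSubgroup B) (Φ : B → ℤ) :
    Φ ∈ convSpan (K : Set B) ↔
      (Φ ∘ p) ∈ convSpan ((K.comap p : AddSubgroup A) : Set A) := by
  classical
  rw [mem_convSpan_iff_finite_cover, mem_convSpan_iff_finite_cover]
  constructor
  · rintro ⟨T, hT⟩
    refine ⟨T.image (Function.surjInv hp), fun l hl => ?_⟩
    obtain ⟨t, ht, h⟩ := hT (p l) hl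
    refine ⟨_, Finset.mem_image_of_mem _ ht, ?_⟩
    rw [AddSubgroup.mem_comap, map_sub, Function.surjInv_eq hp]
    exact h
  · rintro ⟨T, hT⟩
    refine ⟨T.image p, fun b hb => ?_⟩
    obtain ⟨l, rfl⟩ := hp b
    obtain ⟨t, ht, h⟩ := hT l hb
    refine ⟨_, Finset.mem_image_of_mem _ ht, ?_⟩
    rw [AddSubgroup.mem_comap, map_sub] at h
    exact h
end

section
/- Let E be a finite-dimensional real inner product space and A : E → E a linear map that is skew-adjoint (⟪A x, y⟫ = −⟪x, A y⟫ for all x, y ∈ E) and bijective. Then there exists a linear map J : E → E such that: (1) J ∘ J = −id, i.e. J is a linear complex structure on E; (2) J is skew-adjoint, hence a linear isometry of E; (3) every linear map T : E → E commuting with A commutes with J (in particular J commutes with A and with every isometry of E commuting with A); (4) ⟪A x, J x⟫ > 0 for every x ≠ 0; (5) for every s ∈ [0, 1] the map s • J + (1 − s) • A is bijective. -/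
open scoped RealInnerProductSpace

/-- If `A` is a skew-adjoint bijective endomorphism of a finite-dimensional real
inner product space `E`, then there exists a linear complex structure `J` on `E`
which is skew-adjoint, commutes with every endomorphism commuting with `A`,
satisfies `⟪A x, J x⟫ > 0` for `x ≠ 0`, and such that `s • J + (1 - s) • A` is
bijective for all `s ∈ [0, 1]`. -/
theorem exists_compatible_complex_structure
    (E : Type*) [NormedAddCommGroup E] [InnerProductSpace ℝ E] [FiniteDimensional ℝ E]
    (A : E →ₗ[ℝ] E)
    (hskew : ∀ x y : E, ⟪A x, y⟫ = -⟪x, A y⟫)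
    (hbij : Function.Bijective A) :
    ∃ J : E →ₗ[ℝ] E,
      (J ∘ₗ J = -LinearMap.id) ∧
      (∀ x y : E, ⟪J x, y⟫ = -⟪x, J y⟫) ∧
      (∀ T : E →ₗ[ℝ] E, T ∘ₗ A = A ∘ₗ T → T ∘ₗ J = J ∘ₗ T) ∧
      (∀ x : E, x ≠ 0 → 0 < ⟪A x, J x⟫) ∧
      (∀ s : ℝ, s ∈ Set.Icc (0 : ℝ) 1 →
        Function.Bijective (s • J + (1 - s) • A)) := by
  classical
  set S : E →ₗ[ℝ] E := -(A * A) with hSdef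
  have hSap : ∀ x, S x = -(A (A x)) := fun x => rfl
  have hS : S.IsSymmetric := by
    intro x y
    rw [hSap, hSap, inner_neg_left, inner_neg_right, hskew, hskew, neg_neg]
  set b := hS.eigenvectorBasis rfl with hb
  set ev := hS.eigenvalues rfl with hev
  have hSb : ∀ i, S (b i) = ev i • b i := fun i => hS.apply_eigenvectorBasis rfl i
  have hbn : ∀ i, b i ≠ 0 := fun i => b.orthonormal.ne_zero i
  have hpos : ∀ i, 0 < ev i := by
    intro i
    have h1 : ⟪S (b i), b i⟫ = ev i := by
      rw [hSb, real_inner_smul_left, real_inner_self_eq_norm_sq, b.orthonormal.1 i]; norm_num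
    have h2 : ⟪S (b i), b i⟫ = ⟪A (b i), A (b i)⟫ := by
      rw [hSap, inner_neg_left, hskew, neg_neg]
    rw [← h1, h2]
    apply real_inner_self_pos.2
    intro h
    exact hbn i (hbij.1 (by rw [h, map_zero]))
  set p : Polynomial ℝ :=
    Lagrange.interpolate (Finset.univ.image ev) id (fun t => (Real.sqrt t)⁻¹) with hp
  have hpe : ∀ i, p.eval (ev i) = (Real.sqrt (ev i))⁻¹ := by
    intro i
    have := Lagrange.eval_interpolate_at_node (s := Finset.univ.image ev) (v := id)
      (fun t => (Real.sqrt t)⁻¹) (Set.injOn_id _)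
      (Finset.mem_image_of_mem ev (Finset.mem_univ i))
    exact this
  set R : E →ₗ[ℝ] E := Polynomial.aeval S p with hR
  have hRb : ∀ i, R (b i) = (Real.sqrt (ev i))⁻¹ • b i := by
    intro i
    rw [← hpe i]
    exact Module.End.aeval_apply_of_hasEigenvector
      ⟨Module.End.mem_eigenspace_iff.2 (hSb i), hbn i⟩
  have hcomm : ∀ T : E →ₗ[ℝ] E, Commute T A → Commute T R := by
    intro T hT
    have h1 : Commute T S := (hT.mul_right hT).neg_right
    rw [hR, Polynomial.aeval_eq_sum_range]
    exact Commute.sum_right _ _ _ fun i _ => (h1.pow_right i).smul_right _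
  have hRA : ∀ x, R (A x) = A (R x) := fun x =>
    (LinearMap.congr_fun (hcomm A (Commute.refl A)).eq x).symm
  have hRin : ∀ i y, ⟪b i, R y⟫ = (Real.sqrt (ev i))⁻¹ * ⟪b i, y⟫ := by
    intro i y
    conv_lhs => rw [← b.sum_repr y]
    rw [map_sum, inner_sum, Finset.sum_eq_single i]
    · rw [map_smul, hRb, real_inner_smul_right, real_inner_smul_right,
        real_inner_self_eq_norm_sq, b.orthonormal.1 i, b.repr_apply_apply]; ring
    · intro j _ hj
      rw [map_smul, hRb, real_inner_smul_right, real_inner_smul_right,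
        b.orthonormal.2 hj.symm]; ring
    · simp
  have hRs : ∀ x y, ⟪R x, y⟫ = ⟪x, R y⟫ := by
    intro x y
    rw [← b.sum_inner_mul_inner, ← b.sum_inner_mul_inner x]
    refine Finset.sum_congr rfl fun i _ => ?_
    rw [real_inner_comm, hRin, hRin, real_inner_comm x]; ring
  have hRpos : ∀ y, y ≠ 0 → 0 < ⟪y, R y⟫ := by
    intro y hy
    have hnn : ∀ i, 0 < (Real.sqrt (ev i))⁻¹ := fun i => inv_pos.2 (Real.sqrt_pos.2 (hpos i))
    rw [← b.sum_inner_mul_inner]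
    have he : ∀ i, ⟪y, b i⟫ * ⟪b i, R y⟫ = (Real.sqrt (ev i))⁻¹ * ⟪b i, y⟫ ^ 2 := by
      intro i
      rw [hRin, real_inner_comm]; ring
    simp only [he]
    refine Finset.sum_pos' (fun i _ => mul_nonneg (hnn i).le (sq_nonneg _)) ?_
    by_contra! hcon
    apply hy
    apply b.repr.injective
    ext i
    rw [map_zero, b.repr_apply_apply]
    change _ = (0 : ℝ)
    by_contra h
    exact absurd (hcon i (Finset.mem_univ i)) (not_le.2 (mul_pos (hnn i) (by positivity)))
  have hSRR : ∀ x, S (R (R x)) = x := by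
    have : S ∘ₗ R ∘ₗ R = LinearMap.id := by
      apply b.toBasis.ext
      intro i
      have h0 := Real.sqrt_pos.2 (hpos i)
      have h1 := Real.mul_self_sqrt (hpos i).le
      simp only [b.coe_toBasis, LinearMap.comp_apply, hRb, map_smul, hSb, smul_smul,
        LinearMap.id_apply]
      conv_rhs => rw [← one_smul ℝ (b i)]
      congr 1
      nth_rewrite 3 [← h1]
      field_simp
    exact fun x => LinearMap.congr_fun this x
  have hJJ : ∀ x, A (R (A (R x))) = -x := by
    intro x
    have := hSRR x
    rw [hSap] at this
    rw [hRA, ← this, neg_neg, this]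
  have hJs : ∀ x y : E, ⟪A (R x), y⟫ = -⟪x, A (R y)⟫ := by
    intro x y
    rw [hskew, hRs, hRA]
  have hJp : ∀ x : E, x ≠ 0 → 0 < ⟪A x, A (R x)⟫ := by
    intro x hx
    rw [← hRA]
    exact hRpos _ fun h => hx (hbij.1 (by rw [h, map_zero]))
  refine ⟨A ∘ₗ R, ?_, hJs, ?_, hJp, ?_⟩
  · ext x
    exact hJJ x
  · intro T hT
    have hT' : Commute T A := hT
    exact (hT'.mul_right (hcomm T hT')).eq
  · intro s hs
    have hinj : Function.Injective (s • (A ∘ₗ R) + (1 - s) • A) := by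
      rw [injective_iff_map_eq_zero]
      intro x hx
      by_contra hne
      have h1 := hJp x hne
      have h2 : ⟪A (R x), A (R x)⟫ = ⟪x, x⟫ := by
        rw [hJs, hJJ, inner_neg_right, neg_neg]
      have h3 : 0 < ⟪x, x⟫ := real_inner_self_pos.2 hne
      have h4 : ⟪s • A (R x) + (1 - s) • A x, A (R x)⟫ = 0 := by
        have : s • A (R x) + (1 - s) • A x = 0 := hx
        rw [this, inner_zero_left]
      rw [inner_add_left, real_inner_smul_left, real_inner_smul_left, h2] at h4
      rcases hs.1.eq_or_lt with h | h
      · subst h; linarith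
      · nlinarith [mul_pos h h3, mul_nonneg (sub_nonneg.2 hs.2) h1.le]
    exact ⟨hinj, LinearMap.injective_iff_surjective.1 hinj⟩
end

section
/- For every natural number n there exists v : Fin n → ℝ such that the one-parameter subgroup t ↦ ((t · v i) mod ℤ)_{i ∈ Fin n} of the torus (ℝ/ℤ)ⁿ has dense range; that is, the closure of the set {((t·v 1) mod ℤ, …, (t·v n) mod ℤ) : t ∈ ℝ} is the whole torus (ℝ/ℤ)ⁿ. -/
/-- For every `n` there is a vector `v ∈ ℝⁿ` whose associated one-parameter
subgroup `t ↦ (t v₁, …, t vₙ) mod ℤⁿ` is dense in the torus `(ℝ/ℤ)ⁿ`. -/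
theorem exists_dense_one_parameter_subgroup (n : ℕ) :
    ∃ v : Fin n → ℝ,
      DenseRange (fun t : ℝ => fun i : Fin n =>
        ((t * v i : ℝ) : AddCircle (1 : ℝ))) := by
  -- Baire category argument: for each nonempty basic open `U`, the set of good `v` is open dense
  let T := Fin n → AddCircle (1 : ℝ)
  let B := {U : Set T // U ∈ TopologicalSpace.countableBasis T}
  let V : B → Set (Fin n → ℝ) := fun U =>
    {v | ∃ t : ℝ, (fun i : Fin n => ((t * v i : ℝ) : AddCircle (1 : ℝ))) ∈ U.1}
  have hB : Countable B := (TopologicalSpace.countable_countableBasis T).to_subtype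
  have hopen : ∀ U, IsOpen (V U) := by
    intro U
    have hU : IsOpen U.1 := TopologicalSpace.isOpen_of_mem_countableBasis U.2
    have : V U = ⋃ t : ℝ, (fun v : Fin n → ℝ =>
        (fun i : Fin n => ((t * v i : ℝ) : AddCircle (1 : ℝ)))) ⁻¹' U.1 := by
      ext v; simp [V]
    rw [this]
    refine isOpen_iUnion fun t => hU.preimage ?_
    refine continuous_pi fun i => (AddCircle.continuous_mk' (1 : ℝ)).comp ?_
    fun_prop
  have hdense : ∀ U, Dense (V U) := by
    intro U
    obtain ⟨u, hu⟩ := TopologicalSpace.nonempty_of_mem_countableBasis U.2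
    have hy : ∀ i, ∃ y : ℝ, (y : AddCircle (1 : ℝ)) = u i := fun i =>
      QuotientAddGroup.mk_surjective (u i)
    choose y hy using hy
    rw [Metric.dense_iff]
    intro w r hr
    obtain ⟨N, hN⟩ := exists_nat_gt (1 / r)
    have hN0 : (0 : ℝ) < N := lt_trans (by positivity) hN
    refine ⟨fun i => (y i + round (N * w i - y i)) / N, ?_, N, ?_⟩
    · rw [Metric.mem_ball, dist_pi_lt_iff hr]
      intro i
      have h1 := abs_sub_round ((N : ℝ) * w i - y i)
      have h2 : (y i + round (N * w i - y i)) / N - w i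
          = -((N * w i - y i) - round (N * w i - y i)) / N := by
        field_simp
        ring
      rw [Real.dist_eq, h2, abs_div, abs_neg, abs_of_pos hN0, div_lt_iff₀ hN0]
      rw [div_lt_iff₀ hr] at hN
      linarith
    · convert hu using 1
      ext i
      rw [mul_div_cancel₀ _ hN0.ne', ← hy i, AddCircle.coe_add]
      have : ((round ((N : ℝ) * w i - y i) : ℝ) : AddCircle (1 : ℝ)) = 0 :=
        (AddCircle.coe_eq_zero_iff (1 : ℝ)).2 ⟨round ((N : ℝ) * w i - y i), by simp⟩
      rw [this, add_zero]
  obtain ⟨v, hv⟩ := (dense_iInter_of_isOpen hopen hdense).nonempty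
  refine ⟨v, ?_⟩
  rw [DenseRange, (TopologicalSpace.isBasis_countableBasis T).dense_iff]
  intro U hU _
  obtain ⟨t, ht⟩ := Set.mem_iInter.1 hv ⟨U, hU⟩
  exact ⟨_, ht, t, rfl⟩
end

section
/- Let E₁⁺, E₁⁻, E₂⁺, E₂⁻ be finite-dimensional complex inner product spaces and let a : E₁⁺ → E₁⁻ and b : E₂⁺ → E₂⁻ be ℂ-linear maps, with adjoints a† : E₁⁻ → E₁⁺ and b† : E₂⁻ → E₂⁺. Define the ℂ-linear map M : (E₁⁺ ⊗ E₂⁺) × (E₁⁻ ⊗ E₂⁻) → (E₁⁻ ⊗ E₂⁺) × (E₁⁺ ⊗ E₂⁻), where ⊗ denotes the tensor product over ℂ, by M(u, v) = ((a ⊗ id) u − (id ⊗ b†) v, (id ⊗ b) u + (a† ⊗ id) v). Then M is bijective if and only if a is bijective or b is bijective. -/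
open TensorProduct

lemma bij_aux {E F : Type*}
    [NormedAddCommGroup E] [InnerProductSpace ℂ E] [FiniteDimensional ℂ E]
    [NormedAddCommGroup F] [InnerProductSpace ℂ F] [FiniteDimensional ℂ F]
    (a : E →ₗ[ℂ] F) :
    Function.Bijective a ↔ Function.Injective a ∧ Function.Injective (LinearMap.adjoint a) := by
  refine and_congr_right fun _ => ?_
  rw [← LinearMap.range_eq_top, ← LinearMap.ker_eq_bot, ← LinearMap.orthogonal_range,
    Submodule.orthogonal_eq_bot_iff]

lemma not_bij_aux {E F : Type*}
    [NormedAddCommGroup E] [InnerProductSpace ℂ E] [FiniteDimensional ℂ E]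
    [NormedAddCommGroup F] [InnerProductSpace ℂ F] [FiniteDimensional ℂ F]
    (a : E →ₗ[ℂ] F) (h : ¬ Function.Bijective a) :
    (∃ x, a x = 0 ∧ x ≠ 0) ∨ (∃ y, LinearMap.adjoint a y = 0 ∧ y ≠ 0) := by
  rw [bij_aux, injective_iff_map_eq_zero, injective_iff_map_eq_zero] at h
  by_contra! hc
  exact h hc

lemma tmul_ne_aux {E F : Type*}
    [NormedAddCommGroup E] [InnerProductSpace ℂ E]
    [NormedAddCommGroup F] [InnerProductSpace ℂ F]
    {x : E} {y : F} (hx : x ≠ 0) (hy : y ≠ 0) : x ⊗ₜ[ℂ] y ≠ 0 := by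
  rw [← norm_ne_zero_iff, TensorProduct.norm_tmul]
  exact mul_ne_zero (norm_ne_zero_iff.2 hx) (norm_ne_zero_iff.2 hy)

/-- If `A` and `B` generate commuting squares, a kernel vector of the block matrix is killed
by every block. -/
lemma block_aux {H K L : Type*}
    [NormedAddCommGroup H] [InnerProductSpace ℂ H] [FiniteDimensional ℂ H]
    [NormedAddCommGroup K] [InnerProductSpace ℂ K] [FiniteDimensional ℂ K]
    [NormedAddCommGroup L] [InnerProductSpace ℂ L] [FiniteDimensional ℂ L]
    (A : H →ₗ[ℂ] K) (B : H →ₗ[ℂ] L) (u : H)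
    (h : LinearMap.adjoint A (A u) + LinearMap.adjoint B (B u) = 0) : A u = 0 ∧ B u = 0 := by
  have h1 : (inner ℂ (LinearMap.adjoint A (A u) + LinearMap.adjoint B (B u)) u : ℂ) = 0 := by
    rw [h, inner_zero_left]
  rw [inner_add_left, LinearMap.adjoint_inner_left, LinearMap.adjoint_inner_left,
    inner_self_eq_norm_sq_to_K, inner_self_eq_norm_sq_to_K] at h1
  have h2 : ‖A u‖ ^ 2 + ‖B u‖ ^ 2 = 0 :=
    (RCLike.ofReal_eq_zero (K := ℂ)).1 (by push_cast; exact h1)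
  constructor
  · rw [← norm_eq_zero]; nlinarith [sq_nonneg ‖A u‖, sq_nonneg ‖B u‖]
  · rw [← norm_eq_zero]; nlinarith [sq_nonneg ‖A u‖, sq_nonneg ‖B u‖]

/-- The external-product morphism
`M(u, v) = ((a ⊗ id) u − (id ⊗ b†) v, (id ⊗ b) u + (a† ⊗ id) v)`
between `(E₁⁺ ⊗ E₂⁺) × (E₁⁻ ⊗ E₂⁻)` and `(E₁⁻ ⊗ E₂⁺) × (E₁⁺ ⊗ E₂⁻)` is
bijective if and only if `a` is bijective or `b` is bijective. -/
theorem external_product_bijective_iff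
    (E₁p E₁m E₂p E₂m : Type*)
    [NormedAddCommGroup E₁p] [InnerProductSpace ℂ E₁p] [FiniteDimensional ℂ E₁p]
    [NormedAddCommGroup E₁m] [InnerProductSpace ℂ E₁m] [FiniteDimensional ℂ E₁m]
    [NormedAddCommGroup E₂p] [InnerProductSpace ℂ E₂p] [FiniteDimensional ℂ E₂p]
    [NormedAddCommGroup E₂m] [InnerProductSpace ℂ E₂m] [FiniteDimensional ℂ E₂m]
    (a : E₁p →ₗ[ℂ] E₁m) (b : E₂p →ₗ[ℂ] E₂m) :
    Function.Bijective
      (fun p : (E₁p ⊗[ℂ] E₂p) × (E₁m ⊗[ℂ] E₂m) =>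
        ((TensorProduct.map a LinearMap.id) p.1
            - (TensorProduct.map LinearMap.id (LinearMap.adjoint b)) p.2,
         (TensorProduct.map LinearMap.id b) p.1
            + (TensorProduct.map (LinearMap.adjoint a) LinearMap.id) p.2))
      ↔ (Function.Bijective a ∨ Function.Bijective b) := by
  constructor
  · intro hM
    by_contra! hc
    obtain ⟨hca, hcb⟩ := hc
    rcases not_bij_aux a hca with ⟨x, hx, hx0⟩ | ⟨x, hx, hx0⟩ <;>
    rcases not_bij_aux b hcb with ⟨y, hy, hy0⟩ | ⟨y, hy, hy0⟩
    · have := @hM.1 (x ⊗ₜ y, 0) (0, 0) (by simp [hx, hy])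
      exact tmul_ne_aux hx0 hy0 (congrArg Prod.fst this)
    · obtain ⟨⟨u, v⟩, huv⟩ := hM.2 (0, x ⊗ₜ y)
      have h2 := congrArg Prod.snd huv
      simp only at h2
      apply tmul_ne_aux hx0 hy0
      rw [← inner_self_eq_zero (𝕜 := ℂ)]
      nth_rewrite 1 [← h2]
      rw [inner_add_left, ← LinearMap.adjoint_inner_right, ← LinearMap.adjoint_inner_right]
      simp [hx, hy]
    · obtain ⟨⟨u, v⟩, huv⟩ := hM.2 (x ⊗ₜ y, 0)
      have h2 := congrArg Prod.fst huv
      simp only at h2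
      apply tmul_ne_aux hx0 hy0
      rw [← inner_self_eq_zero (𝕜 := ℂ)]
      nth_rewrite 1 [← h2]
      rw [inner_sub_left, ← LinearMap.adjoint_inner_right, ← LinearMap.adjoint_inner_right]
      simp [hx, hy]
    · have := @hM.1 (0, x ⊗ₜ y) (0, 0) (by simp [hx, hy])
      exact tmul_ne_aux hx0 hy0 (congrArg Prod.snd this)
  · intro hab
    let M : (E₁p ⊗[ℂ] E₂p) × (E₁m ⊗[ℂ] E₂m) →ₗ[ℂ] (E₁m ⊗[ℂ] E₂p) × (E₁p ⊗[ℂ] E₂m) :=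
      LinearMap.prod
        ((TensorProduct.map a LinearMap.id) ∘ₗ LinearMap.fst ℂ _ _
          - (TensorProduct.map LinearMap.id (LinearMap.adjoint b)) ∘ₗ LinearMap.snd ℂ _ _)
        ((TensorProduct.map LinearMap.id b) ∘ₗ LinearMap.fst ℂ _ _
          + (TensorProduct.map (LinearMap.adjoint a) LinearMap.id) ∘ₗ LinearMap.snd ℂ _ _)
    change Function.Bijective M
    have hdim : Module.finrank ℂ ((E₁p ⊗[ℂ] E₂p) × (E₁m ⊗[ℂ] E₂m))
        = Module.finrank ℂ ((E₁m ⊗[ℂ] E₂p) × (E₁p ⊗[ℂ] E₂m)) := by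
      simp only [Module.finrank_prod, Module.finrank_tensorProduct]
      rcases hab with h | h
      · rw [(LinearEquiv.ofBijective a h).finrank_eq]
      · rw [(LinearEquiv.ofBijective b h).finrank_eq, add_comm]
    have hinj : Function.Injective M := by
      rw [injective_iff_map_eq_zero]
      rintro ⟨u, v⟩ huv
      have h1 : TensorProduct.map a LinearMap.id u
          - TensorProduct.map LinearMap.id (LinearMap.adjoint b) v = 0 := congrArg Prod.fst huv
      have h2 : TensorProduct.map LinearMap.id b u
          + TensorProduct.map (LinearMap.adjoint a) LinearMap.id v = 0 := congrArg Prod.snd huv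
      have hu := block_aux (TensorProduct.map a (LinearMap.id (M := E₂p)))
        (TensorProduct.map (LinearMap.id (M := E₁p)) b) u (by
          rw [sub_eq_zero.1 h1, eq_neg_of_add_eq_zero_left h2]
          simp only [TensorProduct.adjoint_map, map_neg, ← LinearMap.comp_apply,
            ← TensorProduct.map_comp, LinearMap.adjoint_id, LinearMap.id_comp,
            LinearMap.comp_id, add_neg_cancel])
      obtain ⟨hu1, hu2⟩ := hu
      rw [hu1, zero_sub, neg_eq_zero] at h1
      rw [hu2, zero_add] at h2
      rcases hab with h | h
      · have ha := ((bij_aux a).1 h)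
        rw [Prod.mk_eq_zero]
        exact ⟨(injective_iff_map_eq_zero _).1
            (Module.Flat.rTensor_preserves_injective_linearMap (M := E₂p) a ha.1) u hu1,
          (injective_iff_map_eq_zero _).1
            (Module.Flat.rTensor_preserves_injective_linearMap (M := E₂m) _ ha.2) v h2⟩
      · have hb := ((bij_aux b).1 h)
        rw [Prod.mk_eq_zero]
        exact ⟨(injective_iff_map_eq_zero _).1
            (Module.Flat.lTensor_preserves_injective_linearMap (M := E₁p) b hb.1) u hu2,
          (injective_iff_map_eq_zero _).1
            (Module.Flat.lTensor_preserves_injective_linearMap (M := E₁m) _ hb.2) v h1⟩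
    exact ⟨hinj, (LinearMap.injective_iff_surjective_of_finrank_eq_finrank hdim).1 hinj⟩
end

section
/- Let Λ be an abelian group, β : Λ → ℝ an additive group homomorphism, N a natural number, and α : Fin N → Λ a family of elements with β(α i) ≠ 0 for every i. Let M = {i : β(α i) < 0}, define α' i = α i when β(α i) > 0 and α' i = −(α i) when β(α i) < 0, and set ρ = Σ_{i ∈ M} α' i. Then: (a) for every λ ∈ Λ the set {k : Fin N → ℕ | Σ_i (k i) • (α' i) = λ} is finite; (b) defining Q : Λ → ℤ by Q(λ) = (−1)^{card M} · card {k : Fin N → ℕ | Σ_i (k i) • (α' i) = λ − ρ}, one has for every λ ∈ Λ: Σ_{S ⊆ Fin N} (−1)^{card S} · Q(λ − Σ_{i ∈ S} α i) equals 1 if λ = 0 and equals 0 otherwise. -/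
open Classical

lemma aux_finite {Λ : Type*} [AddCommGroup Λ] (β : Λ →+ ℝ) {N : ℕ} (a : Fin N → Λ)
    (ha : ∀ i, 0 < β (a i)) (l : Λ) : {k : Fin N → ℕ | ∑ i, (k i) • (a i) = l}.Finite := by
  refine (Set.Finite.pi' (t := fun i => Set.Iic ⌊β l / β (a i)⌋₊)
    (fun i => Set.finite_Iic _)).subset ?_
  intro k hk i
  simp only [Set.mem_ofPred_eq] at hk
  refine Nat.le_floor ?_
  rw [le_div_iff₀ (ha i), ← hk, map_sum]
  have h := Finset.single_le_sum (f := fun i => β (k i • a i)) (s := Finset.univ)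
    (fun j _ => by
      simp only [map_nsmul, nsmul_eq_mul]
      exact mul_nonneg (Nat.cast_nonneg _) (ha j).le) (Finset.mem_univ i)
  simpa using h

lemma aux_card {Λ : Type*} [AddCommGroup Λ] {N : ℕ} (a : Fin N → Λ) (l : Λ)
    (hf : {k : Fin N → ℕ | ∑ i, (k i) • (a i) = l}.Finite) (T : Finset (Fin N)) :
    Nat.card {k : Fin N → ℕ // ∑ i, (k i) • (a i) = l - ∑ i ∈ T, a i} =
      (hf.toFinset.filter fun k => ∀ i ∈ T, k i ≠ 0).card := by
  have key : ∀ k : Fin N → ℕ, ∑ i, (k i + if i ∈ T then 1 else 0) • a i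
      = ∑ i, k i • a i + ∑ i ∈ T, a i := by
    intro k
    simp [add_smul, Finset.sum_add_distrib, ite_smul]
  rw [← Nat.card_eq_finsetCard]
  refine Nat.card_congr
    { toFun := fun k => ⟨fun i => k.1 i + if i ∈ T then 1 else 0, ?_⟩
      invFun := fun k => ⟨fun i => k.1 i - if i ∈ T then 1 else 0, ?_⟩
      left_inv := ?_
      right_inv := ?_ }
  · have := k.2
    simp only [Finset.mem_filter, Set.Finite.mem_toFinset, Set.mem_ofPred_eq]
    refine ⟨by rw [key, this]; abel, fun i hi => by simp [hi]⟩
  · have := k.2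
    simp only [Finset.mem_filter, Set.Finite.mem_toFinset, Set.mem_ofPred_eq] at this
    rw [eq_sub_iff_add_eq, ← key]
    refine Eq.trans ?_ this.1
    refine Finset.sum_congr rfl fun i _ => ?_
    congr 1
    by_cases hi : i ∈ T
    · have := this.2 i hi
      simp only [hi, if_true]
      omega
    · simp [hi]
  · intro k
    ext i
    simp
  · intro k
    have := k.2
    simp only [Finset.mem_filter, Set.Finite.mem_toFinset, Set.mem_ofPred_eq] at this
    ext i
    by_cases hi : i ∈ T
    · have := this.2 i hi
      simp only [hi, if_true]
      omega
    · simp [hi]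

lemma aux_sum {Λ : Type*} [AddCommGroup Λ] {N : ℕ} (a : Fin N → Λ) (l : Λ)
    (hf : {k : Fin N → ℕ | ∑ i, (k i) • (a i) = l}.Finite) :
    ∑ T : Finset (Fin N), (-1 : ℤ) ^ T.card *
      (Nat.card {k : Fin N → ℕ // ∑ i, (k i) • (a i) = l - ∑ i ∈ T, a i} : ℤ) =
      if l = 0 then 1 else 0 := by
  have h1 : ∀ k : Fin N → ℕ, (∑ T : Finset (Fin N),
      if (∀ i ∈ T, k i ≠ 0) then (-1 : ℤ) ^ T.card else 0) = if k = 0 then 1 else 0 := by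
    intro k
    rw [← Finset.sum_filter]
    have : (Finset.univ.filter fun T : Finset (Fin N) => ∀ i ∈ T, k i ≠ 0)
        = (Finset.univ.filter fun i => k i ≠ 0).powerset := by
      ext T
      simp [Finset.subset_iff]
    rw [this, Finset.sum_powerset_neg_one_pow_card]
    congr 1
    simp [Finset.filter_eq_empty_iff, funext_iff]
  calc _ = ∑ T : Finset (Fin N), ∑ k ∈ hf.toFinset,
        (if (∀ i ∈ T, k i ≠ 0) then (-1 : ℤ) ^ T.card else 0) := by
        refine Finset.sum_congr rfl fun T _ => ?_
        rw [aux_card a l hf T, ← Finset.sum_filter, Finset.sum_const, nsmul_eq_mul, mul_comm]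
    _ = _ := by
        rw [Finset.sum_comm, Finset.sum_congr rfl fun k _ => h1 k, Finset.sum_ite_eq']
        simp [eq_comm]

/-- The polarized inverse of `∧•W`. Let `Λ` be an abelian group, `β : Λ → ℝ` a
homomorphism, and `α : Fin N → Λ` weights with `β (α i) ≠ 0`. With
`M = {i | β (α i) < 0}`, `α' i = α i` if `β (α i) > 0` and `α' i = -(α i)`
otherwise, and `ρ = Σ_{i ∈ M} α' i`:
(a) for every `λ` there are finitely many `k : Fin N → ℕ` with `Σ k i • α' i = λ`;
(b) the function `Q λ = (-1)^|M| · #{k | Σ k i • α' i = λ - ρ}` satisfies the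
convolution identity `Σ_{S ⊆ Fin N} (-1)^|S| Q (λ - Σ_{i ∈ S} α i) = δ_{λ,0}`. -/
theorem polarized_inverse_identity
    (Λ : Type*) [AddCommGroup Λ] (β : Λ →+ ℝ) (N : ℕ) (α : Fin N → Λ)
    (hβ : ∀ i, β (α i) ≠ 0)
    (M : Finset (Fin N)) (hM : M = Finset.univ.filter fun i => β (α i) < 0)
    (α' : Fin N → Λ) (hα' : ∀ i, α' i = if 0 < β (α i) then α i else -(α i))
    (ρ : Λ) (hρ : ρ = ∑ i ∈ M, α' i)
    (Q : Λ → ℤ)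
    (hQ : ∀ l : Λ, Q l = (-1) ^ (M.card) *
      (Nat.card {k : Fin N → ℕ // ∑ i, (k i) • (α' i) = l - ρ} : ℤ)) :
    (∀ l : Λ, {k : Fin N → ℕ | ∑ i, (k i) • (α' i) = l}.Finite) ∧
    (∀ l : Λ,
      (∑ S : Finset (Fin N), (-1) ^ (S.card) * Q (l - ∑ i ∈ S, α i)) =
        if l = 0 then 1 else 0) := by
  have hpos : ∀ i, 0 < β (α' i) := by
    intro i
    rw [hα']
    split_ifs with h
    · exact h
    · rw [map_neg]
      have := lt_of_le_of_ne (not_lt.mp h) (hβ i)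
      linarith
  have hfin := aux_finite β α' hpos
  refine ⟨hfin, fun l => ?_⟩
  rw [← aux_sum α' l (hfin l)]
  refine Fintype.sum_equiv (Equiv.ofBijective (fun S => symmDiff S M)
    (Function.Involutive.bijective fun S => symmDiff_symmDiff_cancel_right M S)) _ _ fun S => ?_
  simp only [Equiv.ofBijective_apply]
  have hs : ∀ i, α i = if i ∈ M then - α' i else α' i := by
    intro i
    have hm : i ∈ M ↔ ¬ 0 < β (α i) := by
      rw [hM]
      simp only [Finset.mem_filter, Finset.mem_univ, true_and, not_lt]
      exact ⟨le_of_lt, fun h => lt_of_le_of_ne h (hβ i)⟩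
    rw [hα']
    by_cases h : 0 < β (α i) <;> simp [hm, h]
  have e1 : ∑ i ∈ S, α i + ρ = ∑ i ∈ symmDiff S M, α' i := by
    have g : ∀ (A : Finset (Fin N)) (f : Fin N → Λ),
        ∑ i ∈ A, f i = ∑ i, if i ∈ A then f i else 0 := by
      intro A f; simp
    rw [hρ, g S, g M, g (symmDiff S M), ← Finset.sum_add_distrib]
    refine Finset.sum_congr rfl fun i _ => ?_
    rw [hs i]
    by_cases h1 : i ∈ S <;> by_cases h2 : i ∈ M <;> simp [Finset.mem_symmDiff, h1, h2]
  have e2 : (-1 : ℤ) ^ (symmDiff S M).card = (-1) ^ S.card * (-1) ^ M.card := by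
    have g : ∀ A : Finset (Fin N), (-1 : ℤ) ^ A.card = ∏ i, if i ∈ A then -1 else 1 := by
      intro A; simp
    rw [g, g, g, ← Finset.prod_mul_distrib]
    refine Finset.prod_congr rfl fun i _ => ?_
    by_cases h1 : i ∈ S <;> by_cases h2 : i ∈ M <;> simp [Finset.mem_symmDiff, h1, h2]
  rw [hQ, e2, ← e1, mul_assoc, sub_sub]
end

section
/- Let E be a real inner product space, let b, ξ ∈ E, and let s ∈ ℝ. Then the equality (s² + ‖ξ − b‖²) · (s² + ‖ξ + b‖²) = 4 s² ‖b‖² holds if and only if ξ is a real scalar multiple of b (∃ t ∈ ℝ, ξ = t • b) and s² + ‖ξ‖² = ‖b‖². -/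
open scoped RealInnerProductSpace

/-- The determinant computation for the pushed Thom symbol: in a real inner
product space, `(s² + ‖ξ − b‖²)(s² + ‖ξ + b‖²) = 4 s² ‖b‖²` holds if and only if
`ξ` is a real multiple of `b` and `s² + ‖ξ‖² = ‖b‖²`. -/
theorem det_eq_zero_iff
    (E : Type*) [NormedAddCommGroup E] [InnerProductSpace ℝ E]
    (b ξ : E) (s : ℝ) :
    (s ^ 2 + ‖ξ - b‖ ^ 2) * (s ^ 2 + ‖ξ + b‖ ^ 2) = 4 * s ^ 2 * ‖b‖ ^ 2 ↔
      (∃ t : ℝ, ξ = t • b) ∧ s ^ 2 + ‖ξ‖ ^ 2 = ‖b‖ ^ 2 := by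
  have key : (s ^ 2 + ‖ξ - b‖ ^ 2) * (s ^ 2 + ‖ξ + b‖ ^ 2) - 4 * s ^ 2 * ‖b‖ ^ 2
      = (s ^ 2 + ‖ξ‖ ^ 2 - ‖b‖ ^ 2) ^ 2
        + 4 * (‖b‖ ^ 2 * ‖ξ‖ ^ 2 - (inner ℝ ξ b) ^ 2) := by
    rw [norm_sub_sq_real, norm_add_sq_real]
    ring
  constructor
  · intro h
    have hcs : (inner ℝ ξ b) ^ 2 ≤ ‖b‖ ^ 2 * ‖ξ‖ ^ 2 := by
      have h1 := abs_real_inner_le_norm ξ b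
      have h2 := pow_le_pow_left₀ (abs_nonneg _) h1 2
      rw [sq_abs] at h2
      linarith [mul_pow ‖ξ‖ ‖b‖ 2]
    have h0 := sq_nonneg (s ^ 2 + ‖ξ‖ ^ 2 - ‖b‖ ^ 2)
    have hA : (s ^ 2 + ‖ξ‖ ^ 2 - ‖b‖ ^ 2) ^ 2 = 0 := by linarith
    have hC : ‖b‖ ^ 2 * ‖ξ‖ ^ 2 - (inner ℝ ξ b) ^ 2 = 0 := by linarith
    have hA' : s ^ 2 + ‖ξ‖ ^ 2 = ‖b‖ ^ 2 := by
      have := pow_eq_zero_iff (two_ne_zero) |>.1 hA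
      linarith
    refine ⟨?_, hA'⟩
    by_cases hb : b = 0
    · subst hb
      refine ⟨0, ?_⟩
      have h3 : ‖ξ‖ ^ 2 = 0 := by
        rw [norm_zero] at hA'
        nlinarith [sq_nonneg s, sq_nonneg ‖ξ‖]
      have h4 : ‖ξ‖ = 0 := pow_eq_zero_iff (two_ne_zero) |>.1 h3
      simpa using h4
    · have hB : ‖b‖ ^ 2 ≠ 0 := pow_ne_zero 2 (norm_ne_zero_iff.2 hb)
      refine ⟨inner ℝ ξ b / ‖b‖ ^ 2, ?_⟩
      have h3 : ‖ξ - (inner ℝ ξ b / ‖b‖ ^ 2) • b‖ ^ 2 = 0 := by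
        rw [norm_sub_sq_real, inner_smul_right, norm_smul, mul_pow, Real.norm_eq_abs, sq_abs]
        field_simp
        linarith
      have h4 := pow_eq_zero_iff (two_ne_zero) |>.1 h3
      exact sub_eq_zero.1 (norm_eq_zero.1 h4)
  · rintro ⟨⟨t, rfl⟩, h⟩
    have h5 : ‖b‖ ^ 2 * ‖t • b‖ ^ 2 - (inner ℝ (t • b) b) ^ 2 = 0 := by
      rw [real_inner_smul_left, real_inner_self_eq_norm_sq, norm_smul, mul_pow,
        Real.norm_eq_abs, sq_abs]
      ring
    rw [h5, h] at key
    linarith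
end
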